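/- For every integer n ≥ 2 there exists a unique function η : [0,∞) → ℝ that is twice continuously differentiable, satisfies η''(z) = (2κ z η(z) + η(z)²)^n for all z ≥ 0, η'(0) = −κ, lim_{z→∞} η(z) = 0, and η(z) > 0 for all z ≥ 0. -/

import Mathlib

noncomputable def kap : ℝ := 1 / Real.sqrt Real.pi

/-- The reactive profile: positive, C² on [0,∞), satisfies η'' = (2κzη+η²)ⁿ,
η'(0) = −κ, η → 0 at ∞. -/
def IsReactiveProfile (n : ℕ) (η : ℝ → ℝ) : Prop :=
  ContDiffOn ℝ 2 η (Set.Ici 0) ∧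
  (∀ z ∈ Set.Ici (0:ℝ), 0 < η z) ∧
  (∀ z ∈ Set.Ici (0:ℝ),
    derivWithin (derivWithin η (Set.Ici 0)) (Set.Ici 0) z
      = (2 * kap * z * η z + (η z) ^ 2) ^ n) ∧
  derivWithin η (Set.Ici 0) 0 = -kap ∧
  Filter.Tendsto η Filter.atTop (nhds 0)

/-! Let `g` be continuous, nondecreasing and locally Lipschitz in `y`, with `g z 0 = 0`.

Uniqueness: for two solutions of `y'' = g z y`, monotonicity of `g` makes
`(y₁ - y₂) * (y₁' - y₂')` nondecreasing. It starts at `0` when `y₁' 0 = y₂' 0`, so `(y₁ - y₂) ^ 2`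
is nondecreasing as well, and it must vanish if it tends to `0`.

Existence: truncate `g` so that solutions are global, fix `y' 0 = -k`, and shoot with the initial
height `a`. The heights from which `y` becomes negative and those from which `y'` becomes positive
form open sets, disjoint by comparison with the zero solution. The first contains `a = 0` because a
solution cannot touch the axis without coming to rest there; the second contains every `a` large
enough for the absorbed velocity `∫ g z 1` to exceed `k` before `y` falls below `1`. By
connectedness some solution does neither: it is nonnegative and nonincreasing, so the truncation is
inactive, and it tends to `0`, since staying above some `ε > 0` would again absorb more velocity
than `k`. -/

open Set Filter Topology Function
open scoped NNReal

section CauchyLipschitz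

variable {E : Type*} [NormedAddCommGroup E] [NormedSpace ℝ E] {f : ℝ → E → E} {γ₁ γ₂ : ℝ → E}
  {a b c : ℝ} {K : ℝ≥0}

lemma dist_le_mul_exp_of_isIntegralCurveOn (hf : ∀ t ∈ Icc a b, LipschitzWith K (f t))
    (h₁ : IsIntegralCurveOn γ₁ f (Icc a b)) (h₂ : IsIntegralCurveOn γ₂ f (Icc a b)) {t : ℝ}
    (ht : t ∈ Icc a b) :
    dist (γ₁ t) (γ₂ t) ≤ dist (γ₁ a) (γ₂ a) * Real.exp (K * (t - a)) := by
  have hasDerivWithinAt_Ici {γ : ℝ → E} (h : IsIntegralCurveOn γ f (Icc a b)) (t : ℝ)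
      (ht : t ∈ Ico a b) : HasDerivWithinAt γ (f t (γ t)) (Ici t) t :=
    (h t (Ico_subset_Icc_self ht)).mono_of_mem_nhdsWithin (Icc_mem_nhdsGE_of_mem ht)
  exact dist_le_of_trajectories_ODE_of_mem (s := fun _ ↦ univ)
    (fun t ht ↦ (hf t (Ico_subset_Icc_self ht)).lipschitzOnWith)
    h₁.continuousOn (hasDerivWithinAt_Ici h₁) (fun _ _ ↦ mem_univ _)
    h₂.continuousOn (hasDerivWithinAt_Ici h₂) (fun _ _ ↦ mem_univ _) le_rfl t ht

lemma eqOn_of_isIntegralCurveOn_left (hf : ∀ t ∈ Icc a b, LipschitzWith K (f t))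
    (h₁ : IsIntegralCurveOn γ₁ f (Icc a b)) (h₂ : IsIntegralCurveOn γ₂ f (Icc a b))
    (ha : γ₁ a = γ₂ a) : EqOn γ₁ γ₂ (Icc a b) := fun t ht ↦ by
  simpa [ha] using dist_le_mul_exp_of_isIntegralCurveOn hf h₁ h₂ ht

lemma eqOn_of_isIntegralCurveOn_right (hf : ∀ t ∈ Icc a b, LipschitzWith K (f t))
    (h₁ : IsIntegralCurveOn γ₁ f (Icc a b)) (h₂ : IsIntegralCurveOn γ₂ f (Icc a b))
    (hb : γ₁ b = γ₂ b) : EqOn γ₁ γ₂ (Icc a b) := by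
  have hasDerivWithinAt_Iic {γ : ℝ → E} (h : IsIntegralCurveOn γ f (Icc a b)) (t : ℝ)
      (ht : t ∈ Ioc a b) : HasDerivWithinAt γ (f t (γ t)) (Iic t) t :=
    (h t (Ioc_subset_Icc_self ht)).mono_of_mem_nhdsWithin (Icc_mem_nhdsLE_of_mem ht)
  exact ODE_solution_unique_of_mem_Icc_left (s := fun _ ↦ univ)
    (fun t ht ↦ (hf t (Ioc_subset_Icc_self ht)).lipschitzOnWith)
    h₁.continuousOn (hasDerivWithinAt_Iic h₁) (fun _ _ ↦ mem_univ _)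
    h₂.continuousOn (hasDerivWithinAt_Iic h₂) (fun _ _ ↦ mem_univ _) hb

lemma isIntegralCurveOn_Icc_ite (h₁ : IsIntegralCurveOn γ₁ f (Icc a b))
    (h₂ : IsIntegralCurveOn γ₂ f (Icc b c)) (hb : γ₁ b = γ₂ b) :
    IsIntegralCurveOn (fun t ↦ if t ≤ b then γ₁ t else γ₂ t) f (Icc a c) := by
  set γ : ℝ → E := fun t ↦ if t ≤ b then γ₁ t else γ₂ t
  have hγ₁ : EqOn γ γ₁ (Icc a b) := fun t ht ↦ if_pos ht.2
  have hγ₂ : EqOn γ γ₂ (Icc b c) := fun t ht ↦ by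
    rcases ht.1.eq_or_lt with rfl | hlt
    · simpa [γ] using hb
    · exact if_neg hlt.not_ge
  -- At points outside a closed set, every derivative within that set is allowed.
  have of_eqOn {δ : ℝ → E} {s : Set ℝ} (hs : IsClosed s) (hδ : IsIntegralCurveOn δ f s)
      (h : EqOn γ δ s) (t : ℝ) : HasDerivWithinAt γ (f t (γ t)) s t := by
    by_cases ht : t ∈ s
    · rw [h ht]
      exact (hδ t ht).congr_of_mem h ht
    · exact HasFDerivWithinAt.of_notMem_closure (hs.closure_eq.symm ▸ ht)
  exact fun t _ ↦ ((of_eqOn isClosed_Icc h₁ hγ₁ t).union (of_eqOn isClosed_Icc h₂ hγ₂ t)).mono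
    Icc_subset_Icc_union_Icc

variable [CompleteSpace E]

lemma exists_isIntegralCurveOn_Icc_of_mul_lt_one (hab : a ≤ b)
    (hlip : ∀ t ∈ Icc a b, LipschitzWith K (f t)) (hcont : ∀ x, ContinuousOn (f · x) (Icc a b))
    (hK : K * (b - a) < 1) (x₀ : E) : ∃ γ : ℝ → E, γ a = x₀ ∧ IsIntegralCurveOn γ f (Icc a b) := by
  obtain ⟨C, hC⟩ := isCompact_Icc.exists_bound_of_continuousOn (hcont x₀)
  lift C to ℝ≥0 using (norm_nonneg _).trans (hC a (left_mem_Icc.2 hab))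
  have hba : 0 ≤ b - a := sub_nonneg.2 hab
  have hK' : 0 < 1 - K * (b - a) := sub_pos.2 hK
  -- This radius solves `(C + K * r) * (b - a) = r`.
  obtain ⟨r, hr⟩ : ∃ r : ℝ≥0, (r : ℝ) = C * (b - a) / (1 - K * (b - a)) :=
    ⟨⟨_, by positivity⟩, rfl⟩
  have hpl : IsPicardLindelof f (⟨a, left_mem_Icc.2 hab⟩ : Icc a b) x₀ r 0 (C + K * r) K :=
    { lipschitzOnWith := fun t ht ↦ (hlip t ht).lipschitzOnWith
      continuousOn := fun x _ ↦ hcont x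
      norm_le := fun t ht x hx ↦ calc
        ‖f t x‖ ≤ ‖f t x₀‖ + ‖f t x - f t x₀‖ := norm_le_norm_add_norm_sub' _ _
        _ ≤ C + K * r := by
          gcongr
          · exact hC t ht
          · rw [← dist_eq_norm]
            exact (hlip t ht).dist_le_mul_of_le hx
      mul_max_le := by
        simp only [NNReal.coe_add, NNReal.coe_mul, sub_self, max_eq_left hba, NNReal.coe_zero,
          sub_zero]
        apply le_of_eq
        rw [hr]
        field_simp
        ring }
  exact hpl.exists_eq_forall_mem_Icc_hasDerivWithinAt₀

lemma exists_isIntegralCurveOn_Icc (hab : a ≤ b)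
    (hlip : ∀ t ∈ Icc a b, LipschitzWith K (f t)) (hcont : ∀ x, ContinuousOn (f · x) (Icc a b))
    (x₀ : E) : ∃ γ : ℝ → E, γ a = x₀ ∧ IsIntegralCurveOn γ f (Icc a b) := by
  suffices ∀ (N : ℕ) (c : ℝ), c ∈ Icc a b → K * (c - a) < N + 1 →
      ∃ γ : ℝ → E, γ a = x₀ ∧ IsIntegralCurveOn γ f (Icc a c) by
    obtain ⟨N, hN⟩ := exists_nat_gt (K * (b - a))
    exact this N b (right_mem_Icc.2 hab) (by linarith)
  intro N
  induction N with
  | zero =>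
    intro c hc hKc
    have hsub : Icc a c ⊆ Icc a b := Icc_subset_Icc_right hc.2
    exact exists_isIntegralCurveOn_Icc_of_mul_lt_one hc.1 (fun t ht ↦ hlip t (hsub ht))
      (fun x ↦ (hcont x).mono hsub) (by simpa using hKc) x₀
  | succ N ih =>
    intro c hc hKc
    push_cast at hKc
    have hca : 0 ≤ c - a := sub_nonneg.2 hc.1
    have hstep : (c - a) / (N + 2) ≤ c - a := div_le_self hca (by linarith)
    have hstep₀ : 0 ≤ (c - a) / (N + 2) := by positivity
    have hKstep : K * ((c - a) / (N + 2)) < 1 := by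
      rw [← mul_div_assoc, div_lt_one (by positivity)]
      linarith
    obtain ⟨γ₁, hγ₁a, hγ₁⟩ := ih (c - (c - a) / (N + 2)) ⟨by linarith, by linarith [hc.2]⟩ <| calc
      K * (c - (c - a) / (N + 2) - a) = K * (c - a) / (N + 2) * (N + 1) := by field_simp; ring
      _ < 1 * (N + 1) := by gcongr; rwa [mul_div_assoc]
      _ = N + 1 := one_mul _
    have hsub : Icc (c - (c - a) / (N + 2)) c ⊆ Icc a b := Icc_subset_Icc (by linarith) hc.2
    obtain ⟨γ₂, hγ₂c, hγ₂⟩ := exists_isIntegralCurveOn_Icc_of_mul_lt_one (K := K) (by linarith)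
      (fun t ht ↦ hlip t (hsub ht)) (fun x ↦ (hcont x).mono hsub) (by simpa using hKstep)
      (γ₁ (c - (c - a) / (N + 2)))
    refine ⟨_, ?_, isIntegralCurveOn_Icc_ite hγ₁ hγ₂ hγ₂c.symm⟩
    rw [if_pos (by linarith), hγ₁a]

lemma exists_isIntegralCurveOn_Ici (hlip : ∀ b, ∃ K : ℝ≥0, ∀ t ∈ Icc a b, LipschitzWith K (f t))
    (hcont : ∀ x, ContinuousOn (f · x) (Ici a)) (x₀ : E) :
    ∃ γ : ℝ → E, γ a = x₀ ∧ IsIntegralCurveOn γ f (Ici a) := by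
  have exists_Icc (N : ℕ) : ∃ γ : ℝ → E, γ a = x₀ ∧ IsIntegralCurveOn γ f (Icc a (a + N)) := by
    obtain ⟨K, hK⟩ := hlip (a + N)
    exact exists_isIntegralCurveOn_Icc (by simp) hK
      (fun x ↦ (hcont x).mono Icc_subset_Ici_self) x₀
  choose γ hγa hγ using exists_Icc
  have agree {M N : ℕ} (hMN : M ≤ N) : EqOn (γ M) (γ N) (Icc a (a + M)) := by
    obtain ⟨K, hK⟩ := hlip (a + M)
    have hsub : Icc a (a + M) ⊆ Icc a (a + N) := by gcongr
    exact eqOn_of_isIntegralCurveOn_left hK (hγ M) ((hγ N).mono hsub) (by rw [hγa, hγa])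
  have glued (N : ℕ) : EqOn (fun t ↦ γ ⌈t - a⌉₊ t) (γ N) (Icc a (a + N)) := fun t ht ↦
    agree (Nat.ceil_le.2 (by linarith [ht.2])) ⟨ht.1, by linarith [Nat.le_ceil (t - a)]⟩
  refine ⟨fun t ↦ γ ⌈t - a⌉₊ t, hγa _, fun t ht ↦ ?_⟩
  obtain ⟨N, hN⟩ := exists_nat_gt (t - a)
  have htN : t < a + N := by linarith
  have ht_mem : t ∈ Icc a (a + N) := ⟨ht, htN.le⟩
  rw [glued N ht_mem]
  refine ((hγ N t ht_mem).congr_of_mem (glued N) ht_mem).mono_of_mem_nhdsWithin ?_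
  exact inter_mem self_mem_nhdsWithin (mem_nhdsWithin_of_mem_nhds (Iic_mem_nhds htN))

end CauchyLipschitz

/-- `IsReactionTerm g s` says that `g` is a degenerate absorption term for `y'' = g z y` on
`z ∈ [0, ∞)`, `y ∈ s`: continuous, nondecreasing and (locally uniformly in `z`) Lipschitz in `y`,
and vanishing for `y ≤ 0`. The range `s` is a parameter because the term of interest is Lipschitz
only on bounded intervals `[0, M]`, whereas solutions can be continued to `[0, ∞)` when `s` is the
whole line. -/
structure IsReactionTerm (g : ℝ → ℝ → ℝ) (s : Set ℝ) : Prop where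
  continuousOn : ContinuousOn (uncurry g) (Ici 0 ×ˢ s)
  monotoneOn : ∀ z ∈ Ici 0, MonotoneOn (g z) s
  lipschitzOnWith : ∀ T, ∃ K : ℝ≥0, ∀ z ∈ Icc 0 T, LipschitzOnWith K (g z) s
  eq_zero_of_nonpos : ∀ z ∈ Ici 0, ∀ y ∈ s, y ≤ 0 → g z y = 0

/-- `IsReactionSolution g y v` says that `y'' = g z y` on `[0, ∞)` with velocity `y' = v`, the
derivatives at the endpoint `0` being one-sided. -/
structure IsReactionSolution (g : ℝ → ℝ → ℝ) (y v : ℝ → ℝ) : Prop where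
  hasDerivWithinAt_position : ∀ z ∈ Ici 0, HasDerivWithinAt y (v z) (Ici 0) z
  hasDerivWithinAt_velocity : ∀ z ∈ Ici 0, HasDerivWithinAt v (g z (y z)) (Ici 0) z

/-- `IsDecayingProfile g k η` says that `η` is a positive `C²` solution of `η'' = g z η` on
`[0, ∞)` with `η' 0 = -k` which tends to `0` at infinity. -/
def IsDecayingProfile (g : ℝ → ℝ → ℝ) (k : ℝ) (η : ℝ → ℝ) : Prop :=
  ContDiffOn ℝ 2 η (Ici 0) ∧
  (∀ z ∈ Ici (0 : ℝ), 0 < η z) ∧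
  (∀ z ∈ Ici (0 : ℝ), derivWithin (derivWithin η (Ici 0)) (Ici 0) z = g z (η z)) ∧
  derivWithin η (Ici 0) 0 = -k ∧
  Tendsto η atTop (𝓝 0)

lemma monotoneOn_Ici_of_hasDerivWithinAt_nonneg {f f' : ℝ → ℝ} {a : ℝ}
    (hf : ∀ z ∈ Ici a, HasDerivWithinAt f (f' z) (Ici a) z) (hf' : ∀ z ∈ Ici a, 0 ≤ f' z) :
    MonotoneOn f (Ici a) :=
  monotoneOn_of_hasDerivWithinAt_nonneg (convex_Ici a) (fun z hz ↦ (hf z hz).continuousWithinAt)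
    (fun z hz ↦ (hf z (interior_subset hz)).mono interior_subset)
    (fun z hz ↦ hf' z (interior_subset hz))

namespace IsReactionTerm

variable {g : ℝ → ℝ → ℝ} {s : Set ℝ}

lemma nonneg (hg : IsReactionTerm g s) (hs : 0 ∈ s) {z y : ℝ} (hz : 0 ≤ z) (hy : y ∈ s) :
    0 ≤ g z y := by
  rcases le_total y 0 with hy₀ | hy₀
  · exact (hg.eq_zero_of_nonpos z hz y hy hy₀).ge
  · exact (hg.eq_zero_of_nonpos z hz 0 hs le_rfl).symm.trans_le (hg.monotoneOn z hz hs hy hy₀)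

lemma apply_zero (hg : IsReactionTerm g univ) : ∀ z ∈ Ici 0, g z 0 = 0 :=
  fun z hz ↦ hg.eq_zero_of_nonpos z hz 0 (mem_univ 0) le_rfl

lemma continuousOn_left (hg : IsReactionTerm g s) {y : ℝ} (hy : y ∈ s) :
    ContinuousOn (g · y) (Ici 0) :=
  hg.continuousOn.comp (f := fun z ↦ (z, y)) (by fun_prop) fun _ hz ↦ ⟨hz, hy⟩

lemma monotoneOn_Ici (hg : ∀ M, IsReactionTerm g (Icc 0 M)) :
    ∀ z ∈ Ici 0, MonotoneOn (g z) (Ici 0) :=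
  fun z hz _ hx y hy hxy ↦ (hg y).monotoneOn z hz ⟨hx, hxy⟩ ⟨hy, le_rfl⟩ hxy

lemma comp_projIcc {M : ℝ} (hM : 0 ≤ M) (hg : IsReactionTerm g (Icc 0 M)) :
    IsReactionTerm (fun z y ↦ g z (projIcc 0 M hM y)) univ where
  continuousOn := hg.continuousOn.comp (f := fun p : ℝ × ℝ ↦ (p.1, (projIcc 0 M hM p.2 : ℝ)))
    (by fun_prop) fun p hp ↦ ⟨hp.1, Subtype.coe_prop _⟩
  monotoneOn z hz _ _ _ _ hxy :=
    hg.monotoneOn z hz (Subtype.coe_prop _) (Subtype.coe_prop _) (monotone_projIcc hM hxy)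
  lipschitzOnWith T := by
    obtain ⟨K, hK⟩ := hg.lipschitzOnWith T
    refine ⟨K * 1, fun z hz ↦ LipschitzWith.lipschitzOnWith ?_⟩
    exact (lipschitzOnWith_iff_restrict.1 (hK z hz)).comp (LipschitzWith.projIcc hM)
  eq_zero_of_nonpos z hz y _ hy := by
    rw [projIcc_of_le_left hM hy]
    exact hg.eq_zero_of_nonpos z hz 0 (left_mem_Icc.2 hM) le_rfl

lemma lipschitzWith_phaseField (hg : IsReactionTerm g univ) (T : ℝ) :
    ∃ K : ℝ≥0, ∀ z ∈ Icc 0 T, LipschitzWith K fun p : ℝ × ℝ ↦ (p.2, g z p.1) := by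
  obtain ⟨K, hK⟩ := hg.lipschitzOnWith T
  exact ⟨max 1 (K * 1), fun z hz ↦
    LipschitzWith.prod_snd.prodMk ((lipschitzOnWith_univ.1 (hK z hz)).comp LipschitzWith.prod_fst)⟩

end IsReactionTerm

namespace IsReactionSolution

variable {g : ℝ → ℝ → ℝ} {s : Set ℝ} {y v y₁ v₁ y₂ v₂ : ℝ → ℝ} {T : ℝ}

lemma continuousOn_position (h : IsReactionSolution g y v) : ContinuousOn y (Ici 0) :=
  fun z hz ↦ (h.hasDerivWithinAt_position z hz).continuousWithinAt

lemma continuousOn_velocity (h : IsReactionSolution g y v) : ContinuousOn v (Ici 0) :=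
  fun z hz ↦ (h.hasDerivWithinAt_velocity z hz).continuousWithinAt

lemma zero (hg : ∀ z ∈ Ici 0, g z 0 = 0) : IsReactionSolution g 0 0 where
  hasDerivWithinAt_position _ _ := hasDerivWithinAt_const _ _ 0
  hasDerivWithinAt_velocity z hz := by
    rw [Pi.zero_apply, hg z hz]
    exact hasDerivWithinAt_const _ _ 0

lemma congr {g' : ℝ → ℝ → ℝ} (h : IsReactionSolution g y v)
    (hg : ∀ z ∈ Ici 0, g z (y z) = g' z (y z)) : IsReactionSolution g' y v where
  hasDerivWithinAt_position := h.hasDerivWithinAt_position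
  hasDerivWithinAt_velocity z hz := hg z hz ▸ h.hasDerivWithinAt_velocity z hz

lemma iff_isIntegralCurveOn : IsReactionSolution g y v ↔
    IsIntegralCurveOn (fun z ↦ (y z, v z)) (fun z p ↦ (p.2, g z p.1)) (Ici 0) :=
  ⟨fun h z hz ↦ (h.hasDerivWithinAt_position z hz).prodMk (h.hasDerivWithinAt_velocity z hz),
    fun h ↦ ⟨fun z hz ↦ (h z hz).fst, fun z hz ↦ (h z hz).snd⟩⟩

section Comparison

-- The derivative of this product is `(v₁ - v₂)² + (y₁ - y₂) * (g z y₁ - g z y₂)`.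
lemma monotoneOn_sub_mul_sub (h₁ : IsReactionSolution g y₁ v₁) (h₂ : IsReactionSolution g y₂ v₂)
    (hg : ∀ z ∈ Ici 0, MonotoneOn (g z) s) (hy₁ : ∀ z ∈ Ici 0, y₁ z ∈ s)
    (hy₂ : ∀ z ∈ Ici 0, y₂ z ∈ s) :
    MonotoneOn (fun z ↦ (y₁ z - y₂ z) * (v₁ z - v₂ z)) (Ici 0) := by
  refine monotoneOn_Ici_of_hasDerivWithinAt_nonneg (fun z hz ↦
    ((h₁.hasDerivWithinAt_position z hz).sub (h₂.hasDerivWithinAt_position z hz)).mul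
      ((h₁.hasDerivWithinAt_velocity z hz).sub (h₂.hasDerivWithinAt_velocity z hz))) fun z hz ↦ ?_
  refine add_nonneg (mul_self_nonneg _) ?_
  rcases le_total (y₁ z) (y₂ z) with hle | hle
  · exact mul_nonneg_of_nonpos_of_nonpos (sub_nonpos.2 hle)
      (sub_nonpos.2 (hg z hz (hy₁ z hz) (hy₂ z hz) hle))
  · exact mul_nonneg (sub_nonneg.2 hle) (sub_nonneg.2 (hg z hz (hy₂ z hz) (hy₁ z hz) hle))

lemma monotoneOn_sub_sq (h₁ : IsReactionSolution g y₁ v₁) (h₂ : IsReactionSolution g y₂ v₂)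
    (hg : ∀ z ∈ Ici 0, MonotoneOn (g z) s) (hy₁ : ∀ z ∈ Ici 0, y₁ z ∈ s)
    (hy₂ : ∀ z ∈ Ici 0, y₂ z ∈ s) {b : ℝ} (hb : 0 ≤ b)
    (hpair : 0 ≤ (y₁ b - y₂ b) * (v₁ b - v₂ b)) :
    MonotoneOn (fun z ↦ (y₁ z - y₂ z) ^ 2) (Ici b) := by
  have hsub : Ici b ⊆ Ici 0 := Ici_subset_Ici.2 hb
  refine monotoneOn_Ici_of_hasDerivWithinAt_nonneg (fun z hz ↦
    (((h₁.hasDerivWithinAt_position z (hsub hz)).sub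
      (h₂.hasDerivWithinAt_position z (hsub hz))).pow 2).mono hsub) fun z hz ↦ ?_
  have hpair_z : 0 ≤ (y₁ z - y₂ z) * (v₁ z - v₂ z) :=
    hpair.trans (monotoneOn_sub_mul_sub h₁ h₂ hg hy₁ hy₂ hb (hsub hz) hz)
  simp only [Nat.cast_ofNat, Nat.add_one_sub_one, pow_one, mul_assoc]
  exact mul_nonneg zero_le_two hpair_z

lemma eqOn_of_tendsto_sub (h₁ : IsReactionSolution g y₁ v₁) (h₂ : IsReactionSolution g y₂ v₂)
    (hg : ∀ z ∈ Ici 0, MonotoneOn (g z) s) (hy₁ : ∀ z ∈ Ici 0, y₁ z ∈ s)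
    (hy₂ : ∀ z ∈ Ici 0, y₂ z ∈ s) (hv : v₁ 0 = v₂ 0)
    (hlim : Tendsto (fun z ↦ y₁ z - y₂ z) atTop (𝓝 0)) : EqOn y₁ y₂ (Ici 0) := by
  intro z hz
  have hmono := monotoneOn_sub_sq h₁ h₂ hg hy₁ hy₂ le_rfl (by rw [hv, sub_self, mul_zero])
  have hle : (y₁ z - y₂ z) ^ 2 ≤ 0 ^ 2 := by
    refine ge_of_tendsto (hlim.pow 2) ?_
    filter_upwards [eventually_ge_atTop z] with t ht
    exact hmono hz (hz.trans ht) ht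
  rw [zero_pow two_ne_zero] at hle
  exact sub_eq_zero.1 ((sq_nonpos_iff _).1 hle)

lemma monotoneOn_velocity (h : IsReactionSolution g y v) (hg : ∀ z ∈ Ici 0, 0 ≤ g z (y z)) :
    MonotoneOn v (Ici 0) :=
  monotoneOn_Ici_of_hasDerivWithinAt_nonneg h.hasDerivWithinAt_velocity hg

lemma position_add_mul_le (h : IsReactionSolution g y v) (hg : ∀ z ∈ Ici 0, 0 ≤ g z (y z)) {z : ℝ}
    (hz : 0 ≤ z) : y 0 + v 0 * z ≤ y z := by
  have hmono : MonotoneOn (fun z ↦ y z - v 0 * z) (Ici 0) :=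
    monotoneOn_Ici_of_hasDerivWithinAt_nonneg
      (fun t ht ↦ (h.hasDerivWithinAt_position t ht).sub
        ((hasDerivWithinAt_id t _).const_mul (v 0)))
      (fun t ht ↦ by
        rw [mul_one]
        exact sub_nonneg.2 (h.monotoneOn_velocity hg self_mem_Ici ht ht))
  have hle := hmono self_mem_Ici hz hz
  simp only [mul_zero, sub_zero] at hle
  linarith

lemma antitoneOn_position (h : IsReactionSolution g y v) (hv : ∀ z ∈ Ici 0, v z ≤ 0) :
    AntitoneOn y (Ici 0) := by
  have hmono : MonotoneOn (-y) (Ici 0) :=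
    monotoneOn_Ici_of_hasDerivWithinAt_nonneg (fun z hz ↦ (h.hasDerivWithinAt_position z hz).neg)
      fun z hz ↦ neg_nonneg.2 (hv z hz)
  exact fun a ha b hb hab ↦ neg_le_neg_iff.1 (hmono ha hb hab)

lemma velocity_add_integral_le (h : IsReactionSolution g y v) (hT : 0 ≤ T) {φ : ℝ → ℝ}
    (hφ : ContinuousOn φ (Icc 0 T)) (hφg : ∀ z ∈ Icc 0 T, φ z ≤ g z (y z)) :
    v 0 + ∫ z in 0..T, φ z ≤ v T := by
  have hle := intervalIntegral.integral_le_sub_of_hasDeriv_right_of_le hT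
    (h.continuousOn_velocity.mono Icc_subset_Ici_self)
    (fun z hz ↦ (h.hasDerivWithinAt_velocity z hz.1.le).mono
      (Ioi_subset_Ici_self.trans (Ici_subset_Ici.2 hz.1.le)))
    hφ.integrableOn_Icc (fun z hz ↦ hφg z (Ioo_subset_Icc_self hz))
  linarith

lemma velocity_pos_of_le_position (h : IsReactionSolution g y v)
    (hg : ∀ z ∈ Ici 0, MonotoneOn (g z) s) (hy : ∀ z ∈ Ici 0, y z ∈ s) (hT : 0 ≤ T) {ε : ℝ}
    (hε : ε ∈ s) (hcont : ContinuousOn (g · ε) (Ici 0)) (hle : ∀ z ∈ Icc 0 T, ε ≤ y z)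
    (hint : -v 0 < ∫ z in 0..T, g z ε) : 0 < v T := by
  have := h.velocity_add_integral_le hT (hcont.mono Icc_subset_Ici_self)
    fun z hz ↦ hg z hz.1 hε (hy z hz.1) (hle z hz)
  linarith

lemma tendsto_zero (h : IsReactionSolution g y v) (hg : ∀ z ∈ Ici 0, MonotoneOn (g z) (Ici 0))
    (hcont : ∀ ε ∈ Ici 0, ContinuousOn (g · ε) (Ici 0))
    (hint : ∀ ε > 0, ∃ T ≥ 0, -v 0 < ∫ z in 0..T, g z ε)
    (hy : ∀ z ∈ Ici 0, 0 ≤ y z) (hv : ∀ z ∈ Ici 0, v z ≤ 0) : Tendsto y atTop (𝓝 0) := by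
  refine tendsto_order.2 ⟨fun c hc ↦ ?_, fun ε hε ↦ ?_⟩
  · filter_upwards [eventually_ge_atTop 0] with z hz
    exact hc.trans_le (hy z hz)
  · obtain ⟨T, hT, hTint⟩ := hint ε hε
    obtain ⟨z, hz, hzε⟩ : ∃ z ∈ Icc 0 T, y z < ε := by
      by_contra! hle
      exact (hv T hT).not_gt
        (h.velocity_pos_of_le_position hg hy hT hε.le (hcont ε hε.le) hle hTint)
    filter_upwards [eventually_ge_atTop z] with t ht
    exact (h.antitoneOn_position hv hz.1 (hz.1.trans ht) ht).trans_lt hzε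

end Comparison

section Shooting

lemma eqOn_velocity_zero_of_eq_zero (hg : IsReactionTerm g univ) (h : IsReactionSolution g y v)
    (hyT : y T = 0) (hvT : v T = 0) : EqOn v 0 (Icc 0 T) := by
  obtain ⟨K, hK⟩ := hg.lipschitzWith_phaseField T
  have hzero : IsReactionSolution g 0 0 := zero hg.apply_zero
  have heq := eqOn_of_isIntegralCurveOn_right hK
    ((iff_isIntegralCurveOn.1 h).mono Icc_subset_Ici_self)
    ((iff_isIntegralCurveOn.1 hzero).mono Icc_subset_Ici_self) (by simp [hyT, hvT])
  exact fun z hz ↦ congrArg Prod.snd (heq hz)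

lemma exists_of_initial_data (hg : IsReactionTerm g univ) (a w : ℝ) :
    ∃ y v : ℝ → ℝ, y 0 = a ∧ v 0 = w ∧ IsReactionSolution g y v := by
  obtain ⟨γ, hγ₀, hγ⟩ := exists_isIntegralCurveOn_Ici hg.lipschitzWith_phaseField
    (fun p ↦ continuousOn_const.prodMk (hg.continuousOn_left (mem_univ p.1))) (a, w)
  exact ⟨fun z ↦ (γ z).1, fun z ↦ (γ z).2, congrArg Prod.fst hγ₀, congrArg Prod.snd hγ₀,
    iff_isIntegralCurveOn.2 hγ⟩

lemma continuous_of_initial_position (hg : IsReactionTerm g univ) {Y V : ℝ → ℝ → ℝ} {w : ℝ}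
    (h : ∀ a, IsReactionSolution g (Y a) (V a)) (hY : ∀ a, Y a 0 = a) (hV : ∀ a, V a 0 = w)
    (hT : 0 ≤ T) : Continuous fun a ↦ (Y a T, V a T) := by
  obtain ⟨K, hK⟩ := hg.lipschitzWith_phaseField T
  have hcurve (a : ℝ) := (iff_isIntegralCurveOn.1 (h a)).mono (Icc_subset_Ici_self : Icc 0 T ⊆ _)
  refine (LipschitzWith.of_dist_le_mul (K := ⟨Real.exp (K * T), (Real.exp_pos _).le⟩)
    fun a b ↦ ?_).continuous
  have hle := dist_le_mul_exp_of_isIntegralCurveOn hK (hcurve a) (hcurve b) (right_mem_Icc.2 hT)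
  simp only [hY, hV, dist_prod_same_right, sub_zero] at hle
  rw [mul_comm]
  exact hle

lemma position_pos (hg : IsReactionTerm g univ) (h : IsReactionSolution g y v) (hv₀ : v 0 < 0)
    (hy : ∀ z ∈ Ici 0, 0 ≤ y z) : ∀ z ∈ Ici 0, 0 < y z := by
  intro T hT
  refine (hy T hT).lt_of_ne' fun hyT ↦ hv₀.not_ge ?_
  have hmin : IsMinOn y (Ici 0) T := fun z hz ↦ hyT.trans_le (hy z hz)
  rcases (mem_Ici.1 hT).eq_or_lt with rfl | hT'
  · have hmem : (1 : ℝ) ∈ posTangentConeAt (Ici 0) 0 :=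
      mem_posTangentConeAt_of_segment_subset
        ((convex_Ici 0).segment_subset self_mem_Ici (by simp))
    simpa using hmin.localize.hasFDerivWithinAt_nonneg
      (h.hasDerivWithinAt_position 0 self_mem_Ici).hasFDerivWithinAt hmem
  · have hvT : v T = 0 := (hmin.isLocalMin (Ici_mem_nhds hT')).hasDerivAt_eq_zero
      ((h.hasDerivWithinAt_position T hT).hasDerivAt (Ici_mem_nhds hT'))
    exact (h.eqOn_velocity_zero_of_eq_zero hg hyT hvT (left_mem_Icc.2 hT)).ge

-- Compare with the zero solution from a zero of `y` in `[0, z]` on.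
lemma position_mul_velocity_nonneg (hg : IsReactionTerm g univ) (h : IsReactionSolution g y v)
    (hy₀ : 0 ≤ y 0) {z : ℝ} (hz : 0 ≤ z) (hyz : y z < 0) : 0 ≤ y z * v z := by
  obtain ⟨b, hb, hyb⟩ : (0 : ℝ) ∈ y '' Icc 0 z :=
    intermediate_value_Icc' hz (h.continuousOn_position.mono Icc_subset_Ici_self) ⟨hyz.le, hy₀⟩
  simpa [hyb] using monotoneOn_sub_mul_sub h (zero hg.apply_zero) hg.monotoneOn
    (fun _ _ ↦ mem_univ _) (fun _ _ ↦ mem_univ _) hb.1 hz hb.2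

lemma position_neg_of_le (hg : IsReactionTerm g univ) (h : IsReactionSolution g y v)
    (hy₀ : 0 ≤ y 0) {z₀ z : ℝ} (hz₀ : 0 ≤ z₀) (hyz₀ : y z₀ < 0) (hz : z₀ ≤ z) : y z < 0 := by
  by_contra! hyz
  obtain ⟨c, hc, hyc⟩ : (0 : ℝ) ∈ y '' Icc z₀ z :=
    intermediate_value_Icc hz
      (h.continuousOn_position.mono fun _ ht ↦ hz₀.trans ht.1) ⟨hyz₀.le, hyz⟩
  have hsq : y z₀ ^ 2 ≤ y c ^ 2 := by
    simpa using monotoneOn_sub_sq h (zero hg.apply_zero) hg.monotoneOn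
      (fun _ _ ↦ mem_univ _) (fun _ _ ↦ mem_univ _) hz₀
      (by simpa using h.position_mul_velocity_nonneg hg hy₀ hz₀ hyz₀) self_mem_Ici hc.1 hc.1
  rw [hyc, zero_pow two_ne_zero] at hsq
  exact hyz₀.ne ((sq_nonpos_iff _).1 hsq)

lemma velocity_nonpos_of_position_neg (hg : IsReactionTerm g univ) (h : IsReactionSolution g y v)
    (hy₀ : 0 ≤ y 0) {z₀ : ℝ} (hz₀ : 0 ≤ z₀) (hyz₀ : y z₀ < 0) : ∀ z ∈ Ici 0, v z ≤ 0 := by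
  intro z hz
  have hmax : 0 ≤ max z₀ z := hz₀.trans (le_max_left _ _)
  have hyneg : y (max z₀ z) < 0 := h.position_neg_of_le hg hy₀ hz₀ hyz₀ (le_max_left _ _)
  calc v z ≤ v (max z₀ z) := h.monotoneOn_velocity
        (fun t ht ↦ hg.nonneg (mem_univ _) ht (mem_univ _)) hz hmax (le_max_right _ _)
    _ ≤ 0 := nonpos_of_mul_nonneg_right
        (h.position_mul_velocity_nonneg hg hy₀ hmax hyneg) hyneg

lemma velocity_pos_of_initial_position_eq (hg : IsReactionTerm g univ)
    (h : IsReactionSolution g y v) {k c : ℝ} (hk : 0 ≤ k) (hT : 0 ≤ T)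
    (hint : k < ∫ z in 0..T, g z c) (hy₀ : y 0 = c + k * T) (hv₀ : v 0 = -k) : 0 < v T := by
  refine h.velocity_pos_of_le_position hg.monotoneOn (fun _ _ ↦ mem_univ _) hT (mem_univ c)
    (hg.continuousOn_left (mem_univ c)) (fun z hz ↦ ?_) (by rwa [hv₀, neg_neg])
  have hle := h.position_add_mul_le (fun t ht ↦ hg.nonneg (mem_univ _) ht (mem_univ _)) hz.1
  rw [hy₀, hv₀] at hle
  linarith [mul_le_mul_of_nonneg_left hz.2 hk]

lemma exists_position_nonneg_velocity_nonpos (hg : IsReactionTerm g univ) {k c : ℝ} (hk : 0 < k)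
    (hc : 0 ≤ c) (hT : 0 ≤ T) (hint : k < ∫ z in 0..T, g z c) :
    ∃ y v : ℝ → ℝ, IsReactionSolution g y v ∧ y 0 ≤ c + k * T ∧ v 0 = -k ∧
      (∀ z ∈ Ici 0, 0 ≤ y z) ∧ ∀ z ∈ Ici 0, v z ≤ 0 := by
  choose Y V hY hV h using fun a ↦ exists_of_initial_data hg a (-k)
  let A : Set ℝ := ⋃ z ∈ Ici (0 : ℝ), {a | Y a z < 0}
  let B : Set ℝ := ⋃ z ∈ Ici (0 : ℝ), {a | 0 < V a z}
  have hcont (z : ℝ) (hz : z ∈ Ici 0) : Continuous fun a ↦ (Y a z, V a z) :=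
    continuous_of_initial_position hg h hY hV hz
  have hA : IsOpen A := isOpen_biUnion fun z hz ↦
    isOpen_lt (continuous_fst.comp (hcont z hz)) continuous_const
  have hB : IsOpen B := isOpen_biUnion fun z hz ↦
    isOpen_lt continuous_const (continuous_snd.comp (hcont z hz))
  have mem_A {a : ℝ} : a ∈ A ↔ ∃ z ∈ Ici 0, Y a z < 0 := mem_iUnion₂.trans (by simp)
  have mem_B {a : ℝ} : a ∈ B ↔ ∃ z ∈ Ici 0, 0 < V a z := mem_iUnion₂.trans (by simp)
  have hzeroA : 0 ∈ A := by
    rw [mem_A]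
    by_contra! hnonneg
    exact ((h 0).position_pos hg (by simpa [hV] using hk) hnonneg 0 self_mem_Ici).ne' (hY 0)
  have hbB : c + k * T ∈ B :=
    mem_B.2 ⟨T, hT, (h _).velocity_pos_of_initial_position_eq hg hk.le hT hint (hY _) (hV _)⟩
  have hb : 0 ≤ c + k * T := by positivity
  obtain ⟨a, ha, haAB⟩ : ∃ a ∈ Icc 0 (c + k * T), a ∉ A ∪ B := by
    by_contra! hcover
    obtain ⟨a, ha, haA, haB⟩ := isPreconnected_Icc A B hA hB hcover
      ⟨0, left_mem_Icc.2 hb, hzeroA⟩ ⟨_, right_mem_Icc.2 hb, hbB⟩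
    obtain ⟨z, hz, hyz⟩ := mem_A.1 haA
    obtain ⟨t, ht, hvt⟩ := mem_B.1 haB
    exact ((h a).velocity_nonpos_of_position_neg hg ((hY a).symm ▸ ha.1) hz hyz t ht).not_gt hvt
  simp only [mem_union, mem_A, mem_B, not_or, not_exists, not_and, not_lt] at haAB
  exact ⟨Y a, V a, h a, (hY a).trans_le ha.2, hV a, haAB⟩

end Shooting

lemma isDecayingProfile (h : IsReactionSolution g y v) (hg : ContinuousOn (uncurry g) (Ici 0 ×ˢ s))
    (hs : ∀ z ∈ Ici 0, y z ∈ s) (hpos : ∀ z ∈ Ici 0, 0 < y z) {k : ℝ} (hv₀ : v 0 = -k)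
    (hlim : Tendsto y atTop (𝓝 0)) : IsDecayingProfile g k y := by
  have huniq : UniqueDiffOn ℝ (Ici (0 : ℝ)) := uniqueDiffOn_Ici 0
  have hy' : EqOn (derivWithin y (Ici 0)) v (Ici 0) := fun z hz ↦
    (h.hasDerivWithinAt_position z hz).derivWithin (huniq z hz)
  have hv' : EqOn (derivWithin v (Ici 0)) (fun z ↦ g z (y z)) (Ici 0) := fun z hz ↦
    (h.hasDerivWithinAt_velocity z hz).derivWithin (huniq z hz)
  have hv : ContDiffOn ℝ 1 v (Ici 0) := by
    rw [contDiffOn_one_iff_derivWithin huniq]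
    exact ⟨fun z hz ↦ (h.hasDerivWithinAt_velocity z hz).differentiableWithinAt,
      (hg.comp (continuousOn_id.prodMk h.continuousOn_position) fun z hz ↦ ⟨hz, hs z hz⟩).congr hv'⟩
  refine ⟨?_, hpos, fun z hz ↦ ?_, (hy' self_mem_Ici).trans hv₀, hlim⟩
  · rw [← one_add_one_eq_two, contDiffOn_succ_iff_derivWithin huniq]
    exact ⟨fun z hz ↦ (h.hasDerivWithinAt_position z hz).differentiableWithinAt, by simp,
      hv.congr hy'⟩
  · exact (derivWithin_congr hy' (hy' hz)).trans (hv' hz)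

end IsReactionSolution

section DecayingProfile

variable {g : ℝ → ℝ → ℝ} {k : ℝ}

lemma IsDecayingProfile.isReactionSolution {η : ℝ → ℝ} (h : IsDecayingProfile g k η) :
    IsReactionSolution g η (derivWithin η (Ici 0)) := by
  obtain ⟨hη, -, hode, -⟩ := h
  rw [← one_add_one_eq_two, contDiffOn_succ_iff_derivWithin (uniqueDiffOn_Ici 0)] at hη
  refine ⟨fun z hz ↦ (hη.1 z hz).hasDerivWithinAt, fun z hz ↦ ?_⟩
  rw [← hode z hz]
  exact (hη.2.2.differentiableOn one_ne_zero z hz).hasDerivWithinAt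

lemma IsDecayingProfile.eqOn {η₁ η₂ : ℝ → ℝ} (hg : ∀ z ∈ Ici 0, MonotoneOn (g z) (Ici 0))
    (h₁ : IsDecayingProfile g k η₁) (h₂ : IsDecayingProfile g k η₂) : EqOn η₁ η₂ (Ici 0) := by
  obtain ⟨-, hpos₁, -, hv₁, hlim₁⟩ := id h₁
  obtain ⟨-, hpos₂, -, hv₂, hlim₂⟩ := id h₂
  exact h₁.isReactionSolution.eqOn_of_tendsto_sub h₂.isReactionSolution hg
    (fun z hz ↦ (hpos₁ z hz).le) (fun z hz ↦ (hpos₂ z hz).le) (hv₁.trans hv₂.symm)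
    (by simpa using hlim₁.sub hlim₂)

lemma exists_isDecayingProfile (hg : ∀ M, IsReactionTerm g (Icc 0 M)) (hk : 0 < k)
    (hint : ∀ ε > 0, ∃ T ≥ 0, k < ∫ z in 0..T, g z ε) : ∃ η, IsDecayingProfile g k η := by
  obtain ⟨T, hT, hTint⟩ := hint 1 one_pos
  have hkT : 0 ≤ k * T := by positivity
  have hM : 0 ≤ 1 + k * T := by positivity
  have htrunc := (hg (1 + k * T)).comp_projIcc hM
  have hproj {x : ℝ} (hx : x ∈ Icc 0 (1 + k * T)) : (projIcc 0 (1 + k * T) hM x : ℝ) = x := by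
    rw [projIcc_of_mem hM hx]
  obtain ⟨y, v, h, hy₀, hv₀, hy, hv⟩ :=
    IsReactionSolution.exists_position_nonneg_velocity_nonpos htrunc hk zero_le_one hT
      (by simpa only [hproj ⟨zero_le_one, le_add_of_nonneg_right hkT⟩] using hTint)
  have hmem (z : ℝ) (hz : z ∈ Ici 0) : y z ∈ Icc 0 (1 + k * T) :=
    ⟨hy z hz, (h.antitoneOn_position hv self_mem_Ici hz hz).trans hy₀⟩
  have hsol : IsReactionSolution g y v := h.congr fun z hz ↦ by rw [hproj (hmem z hz)]
  have hlim : Tendsto y atTop (𝓝 0) := hsol.tendsto_zero (IsReactionTerm.monotoneOn_Ici hg)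
    (fun ε hε ↦ (hg ε).continuousOn_left ⟨hε, le_rfl⟩) (by rwa [hv₀, neg_neg]) hy hv
  exact ⟨y, hsol.isDecayingProfile (hg _).continuousOn hmem
    (h.position_pos htrunc (by rwa [hv₀, neg_lt_zero]) hy) hv₀ hlim⟩

end DecayingProfile

theorem reactive_profile_exists_unique_general {g : ℝ → ℝ → ℝ} {k : ℝ}
    (hg : ∀ M, IsReactionTerm g (Icc 0 M)) (hk : 0 < k)
    (hint : ∀ ε > 0, ∃ T ≥ 0, k < ∫ z in 0..T, g z ε) :
    (∃ η : ℝ → ℝ, IsDecayingProfile g k η) ∧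
    (∀ η₁ η₂ : ℝ → ℝ, IsDecayingProfile g k η₁ → IsDecayingProfile g k η₂ →
      EqOn η₁ η₂ (Ici 0)) :=
  ⟨exists_isDecayingProfile hg hk hint, fun _ _ ↦
    IsDecayingProfile.eqOn (IsReactionTerm.monotoneOn_Ici hg)⟩

lemma kap_pos : 0 < kap := one_div_pos.2 (Real.sqrt_pos.2 Real.pi_pos)

lemma isReactionTerm_quadratic_pow {c : ℝ} (hc : 0 ≤ c) {n : ℕ} (hn : n ≠ 0) (M : ℝ) :
    IsReactionTerm (fun z y ↦ (c * z * y + y ^ 2) ^ n) (Icc 0 M) where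
  continuousOn := by
    unfold uncurry
    fun_prop
  monotoneOn z hz x hx y _ hxy := by
    have hz : 0 ≤ z := hz
    have hx : 0 ≤ x := hx.1
    dsimp only
    gcongr
  lipschitzOnWith T := by
    have hsmooth : ContDiffOn ℝ 1 (fun p : ℝ × ℝ ↦ (c * p.1 * p.2 + p.2 ^ 2) ^ n)
        (Icc 0 T ×ˢ Icc 0 M) := by fun_prop
    obtain ⟨K, hK⟩ := hsmooth.exists_lipschitzOnWith one_ne_zero
      ((convex_Icc 0 T).prod (convex_Icc 0 M)) (isCompact_Icc.prod isCompact_Icc)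
    refine ⟨K, fun z hz x hx y hy ↦ ?_⟩
    simpa [Prod.edist_eq] using hK (mk_mem_prod hz hx) (mk_mem_prod hz hy)
  eq_zero_of_nonpos z _ y hy hy₀ := by
    simp [le_antisymm hy₀ hy.1, hn]

lemma exists_lt_integral_quadratic_pow {c : ℝ} (hc : 0 ≤ c) (n : ℕ) {k ε : ℝ} (hk : 0 ≤ k)
    (hε : 0 < ε) : ∃ T ≥ 0, k < ∫ z in 0..T, (c * z * ε + ε ^ 2) ^ n := by
  have hT : 0 ≤ (k + 1) / (ε ^ 2) ^ n := by positivity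
  refine ⟨_, hT, ?_⟩
  calc k < k + 1 := lt_add_one k
    _ = ∫ _ in 0..(k + 1) / (ε ^ 2) ^ n, (ε ^ 2) ^ n := by
      rw [intervalIntegral.integral_const, sub_zero, smul_eq_mul, div_mul_cancel₀ _ (by positivity)]
    _ ≤ ∫ z in 0..(k + 1) / (ε ^ 2) ^ n, (c * z * ε + ε ^ 2) ^ n := by
      refine intervalIntegral.integral_mono_on hT (by simp)
        (Continuous.intervalIntegrable (by fun_prop) _ _) fun z hz ↦ ?_
      have hz₀ : 0 ≤ z := hz.1
      gcongr
      exact le_add_of_nonneg_left (by positivity)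

/-- For every integer n ≥ 2 there exists a unique positive twice continuously
differentiable function η on [0,∞) with η'' = (2κzη+η²)ⁿ, η'(0) = −κ, η(z) → 0 as z → ∞. -/
theorem reactive_profile_exists_unique (n : ℕ) (hn : 2 ≤ n) :
    (∃ η : ℝ → ℝ, IsReactiveProfile n η) ∧
    (∀ η₁ η₂ : ℝ → ℝ, IsReactiveProfile n η₁ → IsReactiveProfile n η₂ →
      Set.EqOn η₁ η₂ (Set.Ici 0)) :=
  have hkap : 0 ≤ 2 * kap := mul_nonneg zero_le_two kap_pos.le
  reactive_profile_exists_unique_general (isReactionTerm_quadratic_pow hkap (by omega)) kap_pos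
    fun _ ↦ exists_lt_integral_quadratic_pow hkap n kap_pos.le
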